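/- (Proposition 2.) The function S : ℝ → ℝ defined by S(t₂) = g₁·(μ·F₁ + σ₁·f₁)·Φ((μ−t₂)/σ₂) + g₂·(μ·Φ((μ−t₂)/σ₂) + σ₂·φ((μ−t₂)/σ₂))·F₁ attains a strict global maximum at the unique point t₂⁰ = −(g₁/g₂)·(μ + σ₁·f₁/F₁); that is, S(t₂) < S(t₂⁰) for all t₂ ≠ t₂⁰. -/

import Mathlib

open Real

/-- Density of the standard normal distribution. -/
noncomputable def stdPdf (y : ℝ) : ℝ := (Real.sqrt (2 * Real.pi))⁻¹ * Real.exp (-(y ^ 2) / 2)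

/-- Cumulative distribution function of the standard normal distribution. -/
noncomputable def stdCdf (y : ℝ) : ℝ := ∫ x in Set.Iic y, stdPdf x

/-! Since `Φ' = φ` and `φ' = -yφ`, the function `u ↦ c·Φ(u) + φ(u)` has derivative `(c - u)·φ(u)`,
which changes sign only at `u = c`, from positive to negative. Up to the constant factor
`g₂F₁σ₂ > 0`, `S(t)` is this function at `u = (μ - t)/σ₂` with `c = (μ - t₂⁰)/σ₂`, and `u = c`
means `t = t₂⁰`. -/

open MeasureTheory ProbabilityTheory Set
open scoped NNReal Topology

theorem lt_of_deriv_pos_of_deriv_neg {f : ℝ → ℝ} {c x : ℝ} (hc : ContinuousAt f c)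
    (hpos : ∀ y < c, 0 < deriv f y) (hneg : ∀ y > c, deriv f y < 0) (hx : x ≠ c) :
    f x < f c := by
  have hf : Continuous f := continuous_iff_continuousAt.2 fun y ↦ by
    rcases lt_trichotomy y c with hy | rfl | hy
    · exact (differentiableAt_of_deriv_ne_zero (hpos y hy).ne').continuousAt
    · exact hc
    · exact (differentiableAt_of_deriv_ne_zero (hneg y hy).ne).continuousAt
  rcases hx.lt_or_gt with hxc | hcx
  · have hmono : StrictMonoOn f (Iic c) :=
      strictMonoOn_of_deriv_pos (convex_Iic c) hf.continuousOn (by simpa using hpos)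
    exact hmono hxc.le self_mem_Iic hxc
  · have hanti : StrictAntiOn f (Ici c) :=
      strictAntiOn_of_deriv_neg (convex_Ici c) hf.continuousOn (by simpa using hneg)
    exact hanti self_mem_Ici hcx.le hcx

theorem hasDerivAt_setIntegral_Iic {E : Type*} [NormedAddCommGroup E] [NormedSpace ℝ E]
    [CompleteSpace E] {f : ℝ → E} {x b : ℝ} (hf : IntegrableOn f (Iic b)) (hxb : x < b)
    (hx : ContinuousAt f x) : HasDerivAt (fun z ↦ ∫ t in Iic z, f t) (f x) x := by
  have hsplit : (fun z ↦ ∫ t in Iic z, f t) =ᶠ[𝓝 x]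
      fun z ↦ (∫ t in Iic x, f t) + ∫ t in x..z, f t := by
    filter_upwards [Iio_mem_nhds hxb] with z hzb
    rw [← intervalIntegral.integral_Iic_sub_Iic (hf.mono_set (Iic_subset_Iic.2 hxb.le))
      (hf.mono_set (Iic_subset_Iic.2 (le_of_lt hzb))), add_sub_cancel]
  have hmeas : StronglyMeasurableAtFilter f (𝓝 x) := ⟨Iic b, Iic_mem_nhds hxb, hf.1⟩
  exact ((intervalIntegral.integral_hasDerivAt_right .refl hmeas hx).const_add _)
    |>.congr_of_eventuallyEq hsplit

theorem hasDerivAt_gaussianPDFReal (m : ℝ) (v : ℝ≥0) (x : ℝ) :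
    HasDerivAt (gaussianPDFReal m v) (-((x - m) / v) * gaussianPDFReal m v x) x := by
  have hexponent : HasDerivAt (fun y ↦ -(y - m) ^ 2 / (2 * v)) (-((x - m) / v)) x := by
    refine ((((hasDerivAt_id x).sub_const m).pow 2).neg.div_const (2 * (v : ℝ))).congr_deriv ?_
    simp only [id_eq, Nat.cast_ofNat]
    field_simp
    norm_num
  exact (hexponent.exp.const_mul (√(2 * π * v))⁻¹).congr_deriv (by rw [gaussianPDFReal]; ring)

theorem stdPdf_eq_gaussianPDFReal : stdPdf = gaussianPDFReal 0 1 := by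
  ext y
  simp [stdPdf, gaussianPDFReal]

theorem stdPdf_pos (y : ℝ) : 0 < stdPdf y :=
  stdPdf_eq_gaussianPDFReal ▸ gaussianPDFReal_pos 0 1 y one_ne_zero

theorem integrable_stdPdf : Integrable stdPdf :=
  stdPdf_eq_gaussianPDFReal ▸ integrable_gaussianPDFReal 0 1

theorem hasDerivAt_stdPdf (y : ℝ) : HasDerivAt stdPdf (-y * stdPdf y) y := by
  simpa [stdPdf_eq_gaussianPDFReal] using hasDerivAt_gaussianPDFReal 0 1 y

theorem hasDerivAt_stdCdf (y : ℝ) : HasDerivAt stdCdf (stdPdf y) y :=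
  hasDerivAt_setIntegral_Iic integrable_stdPdf.integrableOn (lt_add_one y)
    (hasDerivAt_stdPdf y).continuousAt

theorem stdCdf_pos (y : ℝ) : 0 < stdCdf y := by
  have hsupport : Function.support stdPdf = univ :=
    Function.support_eq_univ fun x ↦ (stdPdf_pos x).ne'
  rw [stdCdf, setIntegral_pos_iff_support_of_nonneg_ae
    (.of_forall fun x ↦ (stdPdf_pos x).le) integrable_stdPdf.integrableOn, hsupport]
  simp

theorem mul_stdCdf_add_stdPdf_lt {c u : ℝ} (hu : u ≠ c) :
    c * stdCdf u + stdPdf u < c * stdCdf c + stdPdf c := by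
  have hderiv (x : ℝ) :
      HasDerivAt (fun y ↦ c * stdCdf y + stdPdf y) ((c - x) * stdPdf x) x :=
    (((hasDerivAt_stdCdf x).const_mul c).add (hasDerivAt_stdPdf x)).congr_deriv (by ring)
  refine lt_of_deriv_pos_of_deriv_neg (f := fun y ↦ c * stdCdf y + stdPdf y)
    (hderiv c).continuousAt (fun x hx ↦ ?_) (fun x hx ↦ ?_) hu
  · rw [(hderiv x).deriv]
    exact mul_pos (sub_pos.2 hx) (stdPdf_pos x)
  · rw [(hderiv x).deriv]
    exact mul_neg_of_neg_of_pos (sub_neg.2 hx) (stdPdf_pos x)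

/- `F₁` stands for the probability that Group 1 accepts and `m₁` for the expectation of a Group 1
member's increment over that event; in the normal model `m₁ = μF₁ + σ₁f₁`. -/
theorem society_max_unanimous_acceptance_general {μ σ₂ g₁ g₂ m₁ F₁ : ℝ} (hσ₂ : 0 < σ₂)
    (hg₂ : 0 < g₂) (hF₁ : 0 < F₁) {S : ℝ → ℝ}
    (hS : ∀ t, S t = g₁ * m₁ * stdCdf ((μ - t) / σ₂) +
      g₂ * (μ * stdCdf ((μ - t) / σ₂) + σ₂ * stdPdf ((μ - t) / σ₂)) * F₁)
    {t₂ : ℝ} (ht₂ : t₂ ≠ -(g₁ / g₂) * (m₁ / F₁)) : S t₂ < S (-(g₁ / g₂) * (m₁ / F₁)) := by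
  set t₀ : ℝ := -(g₁ / g₂) * (m₁ / F₁) with ht₀
  have hfactor (t : ℝ) : S t = g₂ * F₁ * σ₂ *
      ((μ - t₀) / σ₂ * stdCdf ((μ - t) / σ₂) + stdPdf ((μ - t) / σ₂)) := by
    rw [hS, ht₀]
    field_simp
    ring
  have hne : (μ - t₂) / σ₂ ≠ (μ - t₀) / σ₂ := by
    rwa [Ne, div_left_inj' hσ₂.ne', sub_right_inj]
  rw [hfactor t₂, hfactor t₀]
  exact mul_lt_mul_of_pos_left (mul_stdCdf_add_stdPdf_lt hne) (by positivity)

/-- Proposition 2: under the unanimous acceptance group rule, the expected capital increment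
of the whole society `S(t₂) = g₁·(μ·F₁ + σ₁·f₁)·Φ((μ−t₂)/σ₂) +
g₂·(μ·Φ((μ−t₂)/σ₂) + σ₂·φ((μ−t₂)/σ₂))·F₁` attains a strict global maximum at the
unique point `t₂⁰ = −(g₁/g₂)·(μ + σ₁·f₁/F₁)`. -/
theorem society_max_unanimous_acceptance
    (μ σ : ℝ) (hσ : 0 < σ) (g₁ g₂ : ℕ) (hg₁ : 1 ≤ g₁) (hg₂ : 1 ≤ g₂) (t₁ : ℝ)
    (σ₁ σ₂ : ℝ) (hσ₁ : σ₁ = σ / Real.sqrt g₁) (hσ₂ : σ₂ = σ / Real.sqrt g₂)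
    (F₁ f₁ : ℝ) (hF₁ : F₁ = stdCdf ((μ - t₁) / σ₁)) (hf₁ : f₁ = stdPdf ((μ - t₁) / σ₁))
    (S : ℝ → ℝ)
    (hS : S = fun t₂ => (g₁ : ℝ) * (μ * F₁ + σ₁ * f₁) * stdCdf ((μ - t₂) / σ₂) +
      (g₂ : ℝ) * (μ * stdCdf ((μ - t₂) / σ₂) + σ₂ * stdPdf ((μ - t₂) / σ₂)) * F₁) :
    ∀ t₂ : ℝ, t₂ ≠ -((g₁ : ℝ) / g₂) * (μ + σ₁ * f₁ / F₁) →
      S t₂ < S (-((g₁ : ℝ) / g₂) * (μ + σ₁ * f₁ / F₁)) := by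
  have hF₁_pos : 0 < F₁ := hF₁ ▸ stdCdf_pos _
  have hσ₂_pos : 0 < σ₂ := by rw [hσ₂]; positivity
  have hmean : μ + σ₁ * f₁ / F₁ = (μ * F₁ + σ₁ * f₁) / F₁ := by field_simp
  rw [hmean]
  exact fun _ ↦
    society_max_unanimous_acceptance_general hσ₂_pos (by positivity) hF₁_pos (congrFun hS)
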